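/- Let k ≥ 2 and n_1, …, n_k be positive integers, and let t be the number of indices i with n_i odd. If t is even and t ≥ 2, then the signed total domination number of the complete k-partite graph K_{n_1,…,n_k} equals 2. -/

import Mathlib

open scoped Classical

/-- The signed total domination number of a finite simple graph `G`: the minimum weight of a
function `f : V → {−1, 1}` such that `f(N(v)) ≥ 1` for every vertex `v`. -/
noncomputable def signedTotalDomNum {V : Type*} [Fintype V] (G : SimpleGraph V) : ℤ :=
  sInf {w : ℤ | ∃ f : V → ℤ, (∀ v, f v = 1 ∨ f v = -1) ∧
    (∀ v, 1 ≤ ∑ u ∈ G.neighborFinset v, f u) ∧ w = ∑ v, f v}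

/-- In a complete multipartite graph, the sum of `f` over the neighborhood of `v` is the total sum
of `f` minus its sum over the part containing `v`. -/
theorem sum_neighborFinset_completeMultipartiteGraph {ι : Type*} [Fintype ι] {V : ι → Type*}
    [∀ i, Fintype (V i)] (f : (Σ i, V i) → ℤ) (v : Σ i, V i)
    [Fintype ((SimpleGraph.completeMultipartiteGraph V).neighborSet v)] :
    ∑ u ∈ (SimpleGraph.completeMultipartiteGraph V).neighborFinset v, f u =
      ∑ u, f u - ∑ j, f ⟨v.1, j⟩ := by
  have hN : (SimpleGraph.completeMultipartiteGraph V).neighborFinset v =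
      Finset.univ.filter fun u : Σ i, V i => v.1 ≠ u.1 := by
    ext u
    simp
  have hpart : ∑ u : Σ i, V i, (if v.1 = u.1 then f u else 0) = ∑ j, f ⟨v.1, j⟩ := by
    rw [Fintype.sum_sigma, Finset.sum_eq_single v.1]
    · simp
    · intro i _ hi
      simp [hi.symm]
    · simp
  rw [hN, Finset.sum_filter, ← hpart, ← Finset.sum_sub_distrib]
  refine Finset.sum_congr rfl fun u _ => ?_
  by_cases h : v.1 = u.1 <;> simp [h]

theorem sum_fin_neg_one_pow (m : ℕ) :
    ∑ j : Fin m, (-1 : ℤ) ^ (j : ℕ) = if Odd m then 1 else 0 := by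
  rw [Fin.sum_univ_eq_sum_range (fun j => (-1 : ℤ) ^ j), neg_one_geom_sum]
  by_cases h : Even m <;> simp [h]

/-- If `f` has positive sum over the complement of each of at least two parts, as a signed total
dominating function of a complete multipartite graph does, then its weight is at least `2`. -/
theorem two_le_sum_of_signedTotalDominating {k : ℕ} (hk : 2 ≤ k) {n : Fin k → ℕ}
    (f : (Σ i, Fin (n i)) → ℤ)
    (hf : ∀ i, 1 ≤ ∑ u, f u - ∑ j, f ⟨i, j⟩) : 2 ≤ ∑ u, f u := by
  have hsum : ∑ _i : Fin k, (1 : ℤ) ≤ ∑ i : Fin k, (∑ u, f u - ∑ j, f ⟨i, j⟩) :=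
    Finset.sum_le_sum fun i _ => hf i
  rw [Finset.sum_sub_distrib, ← Fintype.sum_sigma] at hsum
  simp only [Finset.sum_const, Finset.card_univ, Fintype.card_fin, nsmul_eq_mul, mul_one] at hsum
  have hk' : (2 : ℤ) ≤ k := by exact_mod_cast hk
  by_contra! hlt
  nlinarith

theorem signedTotalDomNum_eq_two
    (k : ℕ) (hk : 2 ≤ k) (n : Fin k → ℕ) (hn : ∀ i, 0 < n i)
    (t : ℕ) (ht : t = (Finset.univ.filter fun i => Odd (n i)).card)
    (hteven : Even t) (ht2 : 2 ≤ t) :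
    signedTotalDomNum (SimpleGraph.completeMultipartiteGraph fun i : Fin k => Fin (n i)) = 2 := by
  refine IsLeast.csInf_eq ⟨?_, ?_⟩
  · obtain ⟨m, hm⟩ := hteven
    obtain ⟨A, hAS, hA⟩ := Finset.exists_subset_card_eq
      (show m + 1 ≤ (Finset.univ.filter fun i => Odd (n i)).card by omega)
    have hAodd : ∀ i ∈ A, Odd (n i) := fun i hi => (Finset.mem_filter.1 (hAS hi)).2
    let f : (Σ i, Fin (n i)) → ℤ := fun u => (if u.1 ∈ A then 1 else -1) * (-1) ^ (u.2 : ℕ)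
    have hpart : ∀ i, ∑ j, f ⟨i, j⟩ =
        2 * (if i ∈ A then 1 else 0) - if Odd (n i) then 1 else 0 := by
      intro i
      by_cases hi : i ∈ A
      · simp [f, hi, hAodd i hi, sum_fin_neg_one_pow]
      · simp [f, hi, sum_fin_neg_one_pow]
    have htotal : ∑ u, f u = 2 := by
      rw [Fintype.sum_sigma, Finset.sum_congr rfl fun i _ => hpart i, Finset.sum_sub_distrib,
        ← Finset.mul_sum, Finset.sum_boole, Finset.sum_boole, ← ht, Finset.filter_univ_mem, hA, hm]
      push_cast
      ring
    refine ⟨f, fun u => ?_, fun v => ?_, htotal.symm⟩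
    · rcases neg_one_pow_eq_or ℤ (u.2 : ℕ) with h | h <;> by_cases hu : u.1 ∈ A <;>
        simp [f, h, hu]
    · rw [sum_neighborFinset_completeMultipartiteGraph, htotal, hpart]
      by_cases hv : v.1 ∈ A
      · simp [hv, hAodd _ hv]
      · by_cases ho : Odd (n v.1) <;> simp [hv, ho]
  · rintro w ⟨f, -, hdom, rfl⟩
    refine two_le_sum_of_signedTotalDominating hk f fun i => ?_
    simpa only [sum_neighborFinset_completeMultipartiteGraph] using hdom ⟨i, ⟨0, hn i⟩⟩
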